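/- Let p be a prime. For each j ∈ {1, …, p²+p}, let a_{j,1}, a_{j,2}, a_{j,3} ∈ {0, …, p−1} be the base-p digits of j(p−1), i.e. j(p−1) = a_{j,1}p² + a_{j,2}p + a_{j,3}. Then Σ_{j=1}^{p²+p} (a_{j,1}+1)(a_{j,2}+1)(a_{j,3}+1) = p(p+1)²(p²+p+2)/8. -/

import Mathlib

/-!
Let `n = p - 1`. The multiples `j * n` with `1 ≤ j ≤ p ^ 2 + p` are the three-digit numbers whose
digit sum is `n` or `2 * n`. If `(a, b, c)` has digit sum `n`, the digit-wise complement
`(n - a, n - b, n - c) = (b + c, a + c, a + b)` has digit sum `2 * n`, so the sum runs over the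
triples with `a + b + c = n`, each contributing
`(a + 1) * (b + 1) * (c + 1) + (b + c + 1) * (a + c + 1) * (a + b + 1)`. With `x = a + 1`,
`y = b + 1`, `z = c + 1` and `P = n + 2` this is
`x * y * z + (P - x) * (P - y) * (P - z) = P * (x * y + y * z + z * x) - P ^ 2`, because
`x + y + z = P + 1`: the cubic terms cancel. What is left are convolutions of binomial coefficients.
-/

open Finset

theorem sum_antidiagonal_choose_mul_choose (r s n : ℕ) :
    ∑ x ∈ antidiagonal n, (r + x.1).choose r * (s + x.2).choose s
      = (r + s + 1 + n).choose (r + s + 1) := by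
  have h : (PowerSeries.mk 1 : PowerSeries ℤ) ^ (r + 1) * PowerSeries.mk 1 ^ (s + 1)
      = PowerSeries.mk 1 ^ (r + s + 1 + 1) := by ring
  simp only [PowerSeries.mk_one_pow_eq_mk_choose_add] at h
  have hn := congrArg (PowerSeries.coeff n) h
  simp only [PowerSeries.coeff_mul, PowerSeries.coeff_mk] at hn
  exact_mod_cast hn

theorem sum_antidiagonal_antidiagonal_one (n : ℕ) :
    ∑ x ∈ antidiagonal n, ∑ _y ∈ antidiagonal x.2, 1 = (n + 2).choose 2 := by
  have h := sum_antidiagonal_choose_mul_choose 0 1 n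
  simp only [Nat.choose_zero_right, Nat.choose_one_right, one_mul] at h
  simpa [add_comm] using h

theorem sum_antidiagonal_antidiagonal_pairwise_products (n : ℕ) :
    ∑ x ∈ antidiagonal n, ∑ y ∈ antidiagonal x.2,
        ((x.1 + 1) * (y.1 + 1) + (y.1 + 1) * (y.2 + 1) + (y.2 + 1) * (x.1 + 1))
      = 3 * (n + 4).choose 4 := by
  have h_fst (m : ℕ) : ∑ y ∈ antidiagonal m, (y.1 + 1) = (m + 2).choose 2 := by
    simpa [add_comm] using sum_antidiagonal_choose_mul_choose 1 0 m
  have h_snd (m : ℕ) : ∑ y ∈ antidiagonal m, (y.2 + 1) = (m + 2).choose 2 := by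
    simpa [add_comm] using sum_antidiagonal_choose_mul_choose 0 1 m
  have h_mul (m : ℕ) : ∑ y ∈ antidiagonal m, (y.1 + 1) * (y.2 + 1) = (m + 3).choose 3 := by
    simpa [add_comm] using sum_antidiagonal_choose_mul_choose 1 1 m
  have h_one_two : ∑ x ∈ antidiagonal n, (x.1 + 1) * (x.2 + 2).choose 2 = (n + 4).choose 4 := by
    simpa [add_comm] using sum_antidiagonal_choose_mul_choose 1 2 n
  have h_zero_three : ∑ x ∈ antidiagonal n, (x.2 + 3).choose 3 = (n + 4).choose 4 := by
    simpa [add_comm] using sum_antidiagonal_choose_mul_choose 0 3 n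
  simp only [sum_add_distrib, ← mul_sum, ← sum_mul, h_fst, h_snd, h_mul, h_zero_three,
    mul_comm (Nat.choose _ 2), h_one_two]
  ring

theorem sum_range_mul {M : Type*} [AddCommMonoid M] (g : ℕ → M) (m k : ℕ) :
    ∑ i ∈ range (m * k), g i = ∑ q ∈ range m, ∑ r ∈ range k, g (q * k + r) := by
  induction m with
  | zero => simp
  | succ m ih => rw [add_one_mul, sum_range_add, ih, sum_range_succ]

/- Row `u` of the `(n + 1) × (n + 2)` rectangle is cut after its first `n - u + 1` entries; the
second pieces are the images of the first ones under `i ↦ (n + 1) * (n + 2) - 1 - i`. -/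
theorem sum_range_mul_eq_sum_antidiagonal_antidiagonal {M : Type*} [AddCommMonoid M]
    (g : ℕ → M) (n : ℕ) :
    ∑ i ∈ range ((n + 1) * (n + 2)), g i
      = ∑ x ∈ antidiagonal n, ∑ y ∈ antidiagonal x.2,
          (g (x.1 * (n + 2) + y.1) + g ((y.1 + y.2) * (n + 2) + (x.1 + y.2 + 1))) := by
  have h_row (f : ℕ → M) (u v : ℕ) :
      ∑ t ∈ range (u + v + 2), f t
        = ∑ y ∈ antidiagonal v, f y.1 + ∑ y ∈ antidiagonal u, f (v + y.2 + 1) := by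
    rw [show u + v + 2 = (v + 1) + (u + 1) by ring, sum_range_add,
      ← Nat.sum_antidiagonal_swap (n := u), Nat.sum_antidiagonal_eq_sum_range_succ_mk,
      Nat.sum_antidiagonal_eq_sum_range_succ_mk]
    simp only [Prod.snd_swap, add_right_comm]
  calc ∑ i ∈ range ((n + 1) * (n + 2)), g i
      = ∑ x ∈ antidiagonal n, ∑ t ∈ range (n + 2), g (x.1 * (n + 2) + t) := by
        rw [sum_range_mul, Nat.sum_antidiagonal_eq_sum_range_succ_mk]
    _ = ∑ x ∈ antidiagonal n, ∑ y ∈ antidiagonal x.2, g (x.1 * (n + 2) + y.1)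
        + ∑ x ∈ antidiagonal n, ∑ y ∈ antidiagonal x.1,
            g (x.1 * (n + 2) + (x.2 + y.2 + 1)) := by
        rw [← sum_add_distrib]
        refine sum_congr rfl fun x hx => ?_
        rw [← h_row (fun t => g (x.1 * (n + 2) + t)), mem_antidiagonal.1 hx]
    _ = _ := by
        rw [← Nat.sum_antidiagonal_swap (f := fun x => ∑ y ∈ antidiagonal x.1, _)]
        simp only [Prod.fst_swap, Prod.snd_swap, ← sum_add_distrib]
        refine sum_congr rfl fun x _ => sum_congr rfl fun y hy => ?_
        rw [mem_antidiagonal.1 hy]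

/-- The product of the base-`p` digits of `N`, each increased by one, for `N < p ^ 3`. The leading
factor is not reduced modulo `p`, so for larger `N` it involves everything above the two lowest
digits. -/
def digitWeight (p N : ℕ) : ℕ :=
  (N / p ^ 2 + 1) * (N / p % p + 1) * (N % p + 1)

theorem digitWeight_mul_add_mul_add {p b c : ℕ} (a : ℕ) (hb : b < p) (hc : c < p) :
    digitWeight p ((a * p + b) * p + c) = (a + 1) * (b + 1) * (c + 1) := by
  have h_div_mod (q : ℕ) {r : ℕ} (hr : r < p) : (q * p + r) / p = q ∧ (q * p + r) % p = r :=
    (Nat.div_mod_unique (by lia)).2 ⟨by ring, hr⟩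
  rw [digitWeight, sq, ← Nat.div_div_eq_div_mul, (h_div_mod _ hc).1, (h_div_mod _ hc).2,
    (h_div_mod _ hb).1, (h_div_mod _ hb).2]

theorem sum_digitWeight_eq_sum_antidiagonal_antidiagonal (n : ℕ) :
    ∑ i ∈ range ((n + 1) * (n + 2)), digitWeight (n + 1) ((i + 1) * n)
      = ∑ x ∈ antidiagonal n, ∑ y ∈ antidiagonal x.2,
          ((x.1 + 1) * (y.1 + 1) * (y.2 + 1)
            + (y.1 + y.2 + 1) * (x.1 + y.2 + 1) * (x.1 + y.1 + 1)) := by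
  rw [sum_range_mul_eq_sum_antidiagonal_antidiagonal]
  refine sum_congr rfl fun ⟨a, m⟩ hx => sum_congr rfl fun ⟨b, c⟩ hy => ?_
  obtain rfl : b + c = m := mem_antidiagonal.1 hy
  obtain rfl : a + (b + c) = n := mem_antidiagonal.1 hx
  set n := a + (b + c) with hn
  have h_digits : (a * (n + 2) + b + 1) * n = (a * (n + 1) + b) * (n + 1) + c := by
    rw [hn]; ring
  have h_complement : ((b + c) * (n + 2) + (a + c + 1) + 1) * n
      = ((b + c) * (n + 1) + (a + c)) * (n + 1) + (a + b) := by
    rw [hn]; ring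
  rw [h_digits, h_complement, digitWeight_mul_add_mul_add a (by lia) (by lia),
    digitWeight_mul_add_mul_add (b + c) (by lia) (by lia)]

theorem sum_digitWeight_add_sq_mul_choose_two (n : ℕ) :
    ∑ i ∈ range ((n + 1) * (n + 2)), digitWeight (n + 1) ((i + 1) * n)
        + (n + 2) ^ 2 * (n + 2).choose 2
      = (n + 2) * (3 * (n + 4).choose 4) := by
  rw [sum_digitWeight_eq_sum_antidiagonal_antidiagonal, ← sum_antidiagonal_antidiagonal_one,
    ← sum_antidiagonal_antidiagonal_pairwise_products]
  simp only [mul_sum, ← sum_add_distrib]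
  refine sum_congr rfl fun ⟨a, m⟩ hx => sum_congr rfl fun ⟨b, c⟩ hy => ?_
  obtain rfl : b + c = m := mem_antidiagonal.1 hy
  obtain rfl : a + (b + c) = n := mem_antidiagonal.1 hx
  ring

theorem eight_mul_sum_digitWeight (n : ℕ) :
    8 * ∑ i ∈ range ((n + 1) * (n + 2)), digitWeight (n + 1) ((i + 1) * n)
      = (n + 1) * (n + 2) ^ 2 * ((n + 1) ^ 2 + (n + 1) + 2) := by
  have h_two : 2 * (n + 2).choose 2 = (n + 1) * (n + 2) := by
    have := Nat.ascFactorial_eq_factorial_mul_choose n 2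
    simp only [Nat.ascFactorial, Nat.factorial] at this
    linarith
  have h_four : 24 * (n + 4).choose 4 = (n + 1) * (n + 2) * (n + 3) * (n + 4) := by
    have := Nat.ascFactorial_eq_factorial_mul_choose n 4
    simp only [Nat.ascFactorial, Nat.factorial] at this
    linarith
  have h_sum := sum_digitWeight_add_sq_mul_choose_two n
  zify at h_two h_four h_sum ⊢
  linear_combination 8 * h_sum - 4 * (n + 2 : ℤ) ^ 2 * h_two + (n + 2 : ℤ) * h_four

theorem stmt_13_general (p : ℕ) :
    ∑ j ∈ Finset.Icc 1 (p ^ 2 + p),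
      (j * (p - 1) / p ^ 2 + 1) * (j * (p - 1) / p % p + 1) * (j * (p - 1) % p + 1)
    = p * (p + 1) ^ 2 * (p ^ 2 + p + 2) / 8 := by
  change ∑ j ∈ Icc 1 (p ^ 2 + p), digitWeight p (j * (p - 1)) = _
  rcases p with _ | n
  · simp
  refine (Nat.div_eq_of_eq_mul_right (by norm_num) ?_).symm
  rw [← Ico_add_one_right_eq_Icc, sum_Ico_eq_sum_range, Nat.add_sub_cancel, Nat.add_sub_cancel,
    show (n + 1) ^ 2 + (n + 1) = (n + 1) * (n + 2) by ring]
  simp only [add_comm 1]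
  rw [eight_mul_sum_digitWeight]
  ring

/-- For each `j ∈ {1, …, p²+p}`, writing `j(p−1) = a₁p² + a₂p + a₃` in base `p`
(so `a₁ = j(p−1)/p²`, `a₂ = (j(p−1)/p) mod p`, `a₃ = j(p−1) mod p`), one has
`Σ_{j=1}^{p²+p} (a₁+1)(a₂+1)(a₃+1) = p(p+1)²(p²+p+2)/8`. -/
theorem stmt_13 (p : ℕ) (hp : p.Prime) :
    ∑ j ∈ Finset.Icc 1 (p ^ 2 + p),
      (j * (p - 1) / p ^ 2 + 1) * (j * (p - 1) / p % p + 1) * (j * (p - 1) % p + 1)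
    = p * (p + 1) ^ 2 * (p ^ 2 + p + 2) / 8 :=
  stmt_13_general p
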